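/- For every real t with |t| < π/4 one has the equality of subsets of SL(2,ℂ): {g·n·k : g ∈ SL(2,ℝ), k ∈ SO(2,ℂ)} = {g·a·k : g ∈ SL(2,ℝ), k ∈ SO(2,ℂ)}, where n is the matrix with rows (1, i·sin 2t) and (0, 1), and a is the diagonal matrix diag(e^{it}, e^{−it}). -/

import Mathlib

open Matrix

/-- `SL(2,ℝ)` viewed as the set of real-entried matrices in `SL(2,ℂ)`. -/
def SL2R : Set (Matrix (Fin 2) (Fin 2) ℂ) :=
  {g | g.det = 1 ∧ ∀ i j, (g i j).im = 0}

/-- `SO(2,ℂ) = {k ∈ SL(2,ℂ) : kᵀ·k = 1}`. -/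
def SO2C : Set (Matrix (Fin 2) (Fin 2) ℂ) :=
  {k | k.det = 1 ∧ kᵀ * k = 1}

theorem aux_SL2R_mul {g h : Matrix (Fin 2) (Fin 2) ℂ} (hg : g ∈ SL2R) (hh : h ∈ SL2R) :
    g * h ∈ SL2R := by
  refine ⟨by rw [Matrix.det_mul, hg.1, hh.1, one_mul], fun i j => ?_⟩
  simp [Matrix.mul_apply, Fin.sum_univ_two, Complex.mul_im, hg.2, hh.2]

theorem aux_SO2C_mul {g h : Matrix (Fin 2) (Fin 2) ℂ} (hg : g ∈ SO2C) (hh : h ∈ SO2C) :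
    g * h ∈ SO2C := by
  refine ⟨by rw [Matrix.det_mul, hg.1, hh.1, one_mul], ?_⟩
  rw [Matrix.transpose_mul, Matrix.mul_assoc, ← Matrix.mul_assoc gᵀ, hg.2, Matrix.one_mul, hh.2]

theorem aux_SO2C_tr {g : Matrix (Fin 2) (Fin 2) ℂ} (hg : g ∈ SO2C) : gᵀ ∈ SO2C := by
  refine ⟨by rw [Matrix.det_transpose, hg.1], ?_⟩
  rw [Matrix.transpose_transpose]
  exact mul_eq_one_comm.mp hg.2

theorem aux_decomp (t : ℝ) (ht : |t| < Real.pi / 4) :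
    ∃ g ∈ SL2R, ∃ g' ∈ SL2R, g' * g = 1 ∧ ∃ k ∈ SO2C,
      !![1, Complex.I * (Real.sin (2 * t) : ℂ); 0, 1] =
        g * !![Complex.exp (Complex.I * (t : ℂ)), 0;
                   0, Complex.exp (-(Complex.I * (t : ℂ)))] * k := by
  have hc : 0 < Real.cos (2 * t) := by
    obtain ⟨h1, h2⟩ := abs_lt.mp ht
    exact Real.cos_pos_of_mem_Ioo ⟨by linarith, by linarith⟩
  obtain ⟨p, hp, hp2⟩ : ∃ p : ℝ, 0 < p ∧ p ^ 2 = 2 * Real.cos (2 * t) :=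
    ⟨√(2 * Real.cos (2 * t)), by positivity, Real.sq_sqrt (by positivity)⟩
  have hpc : (p : ℂ) ≠ 0 := by exact_mod_cast hp.ne'
  set e := Complex.exp (Complex.I * (t : ℂ)) with he
  set f := Complex.exp (-(Complex.I * (t : ℂ))) with hf
  have hef : e * f = 1 := by rw [he, hf, ← Complex.exp_add]; simp
  have e2 : e ^ 2 = Complex.exp (2 * t * Complex.I) := by
    rw [he, ← Complex.exp_nat_mul]; congr 1; push_cast; ring
  have f2 : f ^ 2 = Complex.exp (-(2 * t) * Complex.I) := by
    rw [hf, ← Complex.exp_nat_mul]; congr 1; push_cast; ring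
  have hC : (p : ℂ) ^ 2 = e ^ 2 + f ^ 2 := by
    have : (p : ℂ) ^ 2 = 2 * Complex.cos (2 * t) := by exact_mod_cast congrArg Complex.ofReal hp2
    rw [this, Complex.cos, e2, f2]; ring
  have hS : Complex.I * (Real.sin (2 * t) : ℂ) = (e ^ 2 - f ^ 2) / 2 := by
    push_cast
    rw [Complex.sin, e2, f2]
    linear_combination (Complex.exp (-(2 * t) * Complex.I) - Complex.exp (2 * t * Complex.I)) / 2 * Complex.I_sq
  rw [hS]
  clear_value e f
  refine ⟨!![((p / 2 : ℝ) : ℂ), ((-p / 2 : ℝ) : ℂ); ((1 / p : ℝ) : ℂ), ((1 / p : ℝ) : ℂ)], ⟨?_, ?_⟩,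
    !![((1 / p : ℝ) : ℂ), ((p / 2 : ℝ) : ℂ); ((-1 / p : ℝ) : ℂ), ((p / 2 : ℝ) : ℂ)], ⟨?_, ?_⟩, ?_,
    !![f / p, e / p; -e / p, f / p], ⟨?_, ?_⟩, ?_⟩
  · rw [Matrix.det_fin_two_of]; push_cast; field_simp; ring
  · intro i j; fin_cases i <;> fin_cases j <;> exact Complex.ofReal_im _
  · rw [Matrix.det_fin_two_of]; push_cast; field_simp; ring
  · intro i j; fin_cases i <;> fin_cases j <;> exact Complex.ofReal_im _
  · rw [Matrix.mul_fin_two, Matrix.one_fin_two]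
    push_cast
    congr! 3 <;> first | (field_simp; done) | (field_simp; ring)
  · rw [Matrix.det_fin_two_of]; field_simp; linear_combination -hC
  · rw [← Matrix.ext_iff]
    simp only [Fin.forall_fin_two, Matrix.mul_apply, Fin.sum_univ_two, Matrix.transpose_apply]
    simp
    refine ⟨⟨?_, ?_⟩, ?_, ?_⟩ <;> field_simp
    · linear_combination -hC
    · ring
    · ring
    · linear_combination -hC
  · rw [← Matrix.ext_iff]
    simp [Fin.forall_fin_two, Matrix.mul_apply, Fin.sum_univ_two]
    refine ⟨⟨?_, ?_⟩, ?_, ?_⟩ <;> field_simp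
    · linear_combination -2 * hef
    · ring
    · ring
    · linear_combination hC

/-- for `|t| < π/4`,
`SL(2,ℝ)·n·SO(2,ℂ) = SL(2,ℝ)·a·SO(2,ℂ)` where `n = [[1, i sin 2t],[0,1]]` and
`a = diag(e^{it}, e^{-it})`. -/
theorem stmt_3 (t : ℝ) (ht : |t| < Real.pi / 4) :
    {m : Matrix (Fin 2) (Fin 2) ℂ | ∃ g ∈ SL2R, ∃ k ∈ SO2C,
        m = g * !![1, Complex.I * (Real.sin (2 * t) : ℂ); 0, 1] * k} =
    {m : Matrix (Fin 2) (Fin 2) ℂ | ∃ g ∈ SL2R, ∃ k ∈ SO2C,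
        m = g * !![Complex.exp (Complex.I * (t : ℂ)), 0;
                   0, Complex.exp (-(Complex.I * (t : ℂ)))] * k} := by
  obtain ⟨g0, hg0, g1, hg1, hgg, k0, hk0, hn⟩ := aux_decomp t ht
  rw [hn]
  ext m
  constructor
  · rintro ⟨g, hg, k, hk, rfl⟩
    exact ⟨g * g0, aux_SL2R_mul hg hg0, k0 * k, aux_SO2C_mul hk0 hk, by
      simp only [Matrix.mul_assoc]⟩
  · rintro ⟨g, hg, k, hk, rfl⟩
    refine ⟨g * g1, aux_SL2R_mul hg hg1, k0ᵀ * k, aux_SO2C_mul (aux_SO2C_tr hk0) hk, ?_⟩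
    have h2 : k0 * k0ᵀ = 1 := mul_eq_one_comm.mp hk0.2
    simp only [Matrix.mul_assoc]
    rw [← Matrix.mul_assoc k0, h2, ← Matrix.mul_assoc g1 g0, hgg, Matrix.one_mul, Matrix.one_mul]
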